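/- Let N = 3 and let ω ∈ ℂ be a primitive cube root of unity. Suppose (q_{ij})_{i,j ∈ ℤ/3ℤ} satisfies the anyonic permutation relations in A and, in addition, the braided commutation relations q_{ij} q_{kl} = ω^{kj - il} q_{kl} q_{ij} for all i,j,k,l ∈ ℤ/3ℤ. Then all the elements q_{ij} pairwise commute: q_{ij} q_{kl} = q_{kl} q_{ij} for all i,j,k,l ∈ ℤ/3ℤ. -/

import Mathlib

noncomputable section

/-- `ω ^ m` for `m ∈ ℤ/Nℤ`; this is well defined (independent of the chosen
representative) as soon as `ω ^ N = 1`. -/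
def wpow (N : ℕ) (ω : ℂ) (m : ZMod N) : ℂ := ω ^ m.val

/-- `z ^ m` for `m ∈ ℤ/Nℤ`; well defined when `z ^ N = 1`. -/
def apow {A : Type*} [Monoid A] (N : ℕ) (z : A) (m : ZMod N) : A := z ^ m.val

/-- The anyonic permutation relations for a family `(q i j)` indexed by `ℤ/Nℤ × ℤ/Nℤ`. -/
def AnyonicPermRel (N : ℕ) [NeZero N] (ω : ℂ) {A : Type*} [Ring A] [StarRing A]
    [Algebra ℂ A] (q : ZMod N → ZMod N → A) : Prop :=
  (∀ i : ZMod N, q 0 i = if i = 0 then 1 else 0) ∧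
  (∀ i : ZMod N, q i 0 = if i = 0 then 1 else 0) ∧
  (∀ i j : ZMod N, star (q i j) = wpow N ω (-(i * (i - j))) • q (-i) (-j)) ∧
  (∀ i j k : ZMod N, q k (i + j) =
    ∑ l : ZMod N, wpow N ω (-(l * (i - k + l))) • (q (k - l) i * q l j)) ∧
  (∀ i j k : ZMod N, q (i + j) k =
    ∑ l : ZMod N, wpow N ω (-(i * (l - j))) • (q j l * q i (k - l)))

/-- The untwisted relations for a family `(a i j)` indexed by `ℤ/Nℤ × ℤ/Nℤ`. -/
def UntwistedRel (N : ℕ) [NeZero N] {A : Type*} [Ring A] [StarRing A]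
    (a : ZMod N → ZMod N → A) : Prop :=
  (∀ i : ZMod N, a i 0 = if i = 0 then 1 else 0) ∧
  (∀ i j : ZMod N, star (a i j) = a (-i) (-j)) ∧
  (∀ i j k : ZMod N, ∑ l : ZMod N, a (k - l) i * a l j = a k (i + j)) ∧
  (∀ i j k : ZMod N, ∑ l : ZMod N, a j l * a i (k - l) = a (i + j) k)

/-- A matrix `(m i j)` over a unital `*`-algebra is unitary. -/
def IsUnitaryMatrix (N : ℕ) [NeZero N] {A : Type*} [Ring A] [StarRing A]
    (m : ZMod N → ZMod N → A) : Prop :=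
  (∀ i j : ZMod N, ∑ k : ZMod N, star (m k i) * m k j = if i = j then 1 else 0) ∧
  (∀ i j : ZMod N, ∑ k : ZMod N, m i k * star (m j k) = if i = j then 1 else 0)

/-- The twisted conjugate matrix `ū_R` with entries `ω^{-i(j-i)} u_{ij}*`. -/
def conjR (N : ℕ) (ω : ℂ) {A : Type*} [Ring A] [StarRing A] [Algebra ℂ A]
    (u : ZMod N → ZMod N → A) : ZMod N → ZMod N → A :=
  fun i j => wpow N ω (-(i * (j - i))) • star (u i j)

/-- A magic unitary: entries are projections and all rows and columns sum to `1`. -/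
def IsMagicUnitary (N : ℕ) [NeZero N] {A : Type*} [Ring A] [StarRing A]
    (u : ZMod N → ZMod N → A) : Prop :=
  (∀ i j : ZMod N, u i j * u i j = u i j) ∧
  (∀ i j : ZMod N, star (u i j) = u i j) ∧
  (∀ j : ZMod N, ∑ i : ZMod N, u i j = 1) ∧
  (∀ i : ZMod N, ∑ j : ZMod N, u i j = 1)


theorem stmt_17 (ω : ℂ) (hω : IsPrimitiveRoot ω 3)
    {A : Type*} [NormedRing A] [StarRing A] [CStarRing A]
    [NormedAlgebra ℂ A] [CompleteSpace A] [StarModule ℂ A]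
    (q : ZMod 3 → ZMod 3 → A) (hq : AnyonicPermRel 3 ω q)
    (hbr : ∀ i j k l : ZMod 3,
      q i j * q k l = wpow 3 ω (k * j - i * l) • (q k l * q i j)) :
    ∀ i j k l : ZMod 3, q i j * q k l = q k l * q i j := by
  have w3 : ω ^ 3 = 1 := hω.pow_eq_one
  have w4 : ω * ω ^ 2 = 1 := by rw [← w3]; ring
  have w5 : ω ^ 2 * ω = 1 := by rw [← w3]; ring
  obtain ⟨h0, h0', -, h3, h4⟩ := hq
  have u : (Finset.univ : Finset (ZMod 3)) = {0, 1, 2} := by decide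
  have W0 : wpow 3 ω 0 = 1 := by simp [wpow]
  have W1 : wpow 3 ω 1 = ω := by
    have : (1 : ZMod 3).val = 1 := by decide
    simp [wpow, this]
  have W2 : wpow 3 ω 2 = ω ^ 2 := by
    have : (2 : ZMod 3).val = 2 := by decide
    simp [wpow, this]
  have key : ∀ x y : A, x = y → x + y = 0 → x = 0 := by
    intro x y h1 h2
    rw [← h1, ← two_smul ℂ] at h2
    exact (smul_eq_zero.mp h2).resolve_left two_ne_zero
  have z2 : q 0 2 = 0 := by rw [h0]; exact if_neg (by decide)
  have z1 : q 0 1 = 0 := by rw [h0]; exact if_neg (by decide)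
  have z2' : q 2 0 = 0 := by rw [h0']; exact if_neg (by decide)
  have z1' : q 1 0 = 0 := by rw [h0']; exact if_neg (by decide)
  have z0 : q 0 0 = 1 := by rw [h0]; exact if_pos rfl
  have e11 : (1 : ZMod 3) + 1 = 2 := by decide
  have e22 : (2 : ZMod 3) + 2 = 1 := by decide
  have n1 : (0 : ZMod 3) - 1 = 2 := by decide
  have n2 : (0 : ZMod 3) - 2 = 1 := by decide
  -- the two orders of a product, each a multiple of the other
  have sw : ∀ x y : A, x * y = ω • (y * x) → x * y + ω • (y * x) = 0 →
      x * y = y * x := by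
    intro x y h1 h2
    have h3 := key _ _ h1 h2
    have h4 : y * x = 0 := by
      rw [h3] at h1
      exact (smul_eq_zero.mp h1.symm).resolve_left (hω.ne_zero (by norm_num))
    rw [h3, h4]
  have ac : q 1 1 * q 2 1 = q 2 1 * q 1 1 := by
    have b := hbr 1 1 2 1
    have r := h3 1 1 0
    rw [show (2 * 1 - 1 * 1 : ZMod 3) = 1 by decide, W1] at b
    rw [u, Finset.sum_insert (by decide), Finset.sum_insert (by decide), Finset.sum_singleton,
      e11, n1, n2, z1, z2, show (-(1 * (1 - 0 + 1)) : ZMod 3) = 1 by decide,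
      show (-(2 * (1 - 0 + 2)) : ZMod 3) = 0 by decide, W0, W1, mul_zero, smul_zero, zero_add,
      one_smul] at r
    exact sw _ _ b (by rw [add_comm]; exact r.symm)
  have ba : q 1 2 * q 1 1 = q 1 1 * q 1 2 := by
    have b := hbr 1 2 1 1
    have r := h4 1 1 0
    rw [show (1 * 2 - 1 * 1 : ZMod 3) = 1 by decide, W1] at b
    rw [u, Finset.sum_insert (by decide), Finset.sum_insert (by decide), Finset.sum_singleton,
      e11, n1, n2, z1', z2', show (-(1 * (1 - 1)) : ZMod 3) = 0 by decide,
      show (-(1 * (2 - 1)) : ZMod 3) = 2 by decide, W0, W2, zero_mul, smul_zero, zero_add,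
      one_smul] at r
    refine sw _ _ b ?_
    have r2 := congrArg (fun t => ω • t) r
    simp only [smul_zero, smul_add, smul_smul, w4, one_smul] at r2
    rw [add_comm]; exact r2.symm
  have cd : q 2 1 * q 2 2 = q 2 2 * q 2 1 := by
    have b := hbr 2 1 2 2
    have r := h4 2 2 0
    rw [show (2 * 1 - 2 * 2 : ZMod 3) = 1 by decide, W1] at b
    rw [u, Finset.sum_insert (by decide), Finset.sum_insert (by decide), Finset.sum_singleton,
      e22, n1, n2, z1', z2', show (-(2 * (1 - 2)) : ZMod 3) = 2 by decide,
      show (-(2 * (2 - 2)) : ZMod 3) = 0 by decide, W0, W2, zero_mul, smul_zero, zero_add,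
      one_smul] at r
    refine sw _ _ b ?_
    have r2 := congrArg (fun t => ω • t) r
    simp only [smul_zero, smul_add, smul_smul, w4, one_smul] at r2
    exact r2.symm
  have db : q 2 2 * q 1 2 = q 1 2 * q 2 2 := by
    have b := hbr 2 2 1 2
    have r := h3 2 2 0
    rw [show (1 * 2 - 2 * 2 : ZMod 3) = 1 by decide, W1] at b
    rw [u, Finset.sum_insert (by decide), Finset.sum_insert (by decide), Finset.sum_singleton,
      e22, n1, n2, z1, z2, show (-(1 * (2 - 0 + 1)) : ZMod 3) = 0 by decide,
      show (-(2 * (2 - 0 + 2)) : ZMod 3) = 1 by decide, W0, W1, mul_zero, smul_zero, zero_add,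
      one_smul] at r
    exact sw _ _ b r.symm
  have ad : q 1 1 * q 2 2 = q 2 2 * q 1 1 := by
    have b := hbr 1 1 2 2
    rwa [show (2 * 1 - 1 * 2 : ZMod 3) = 0 by decide, W0, one_smul] at b
  have bc : q 1 2 * q 2 1 = q 2 1 * q 1 2 := by
    have b := hbr 1 2 2 1
    rwa [show (2 * 2 - 1 * 1 : ZMod 3) = 0 by decide, W0, one_smul] at b
  have cases3 : ∀ i : ZMod 3, i = 0 ∨ i = 1 ∨ i = 2 := by decide
  intro i j k l
  rcases cases3 i with rfl | rfl | rfl <;> rcases cases3 j with rfl | rfl | rfl <;>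
    rcases cases3 k with rfl | rfl | rfl <;> rcases cases3 l with rfl | rfl | rfl <;>
    simp only [z0, z1, z2, z1', z2', mul_zero, zero_mul, mul_one, one_mul, ac, ba, cd, db, ad, bc]
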